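/- arXiv:2001.05785 — 3 statements merged into one kernel-verified Lean document; each statement's English description precedes it below -/
import Mathlib

section
/- Let S be a Polish metric space and let P be an asymptotically stable Markov-Feller operator on S with invariant probability measure μ*. If there exists at least one point z in the support of μ* at which P has the e-property in C_b(S), then P has the e-property in C_b(S) at every point of S. -/
open MeasureTheory ProbabilityTheory Filter Topology

/-- The `n`-step evolution of a measure under the Markov operator generated by the
transition kernel `κ`: `P⁰μ = μ`, `Pⁿ⁺¹μ = (Pⁿμ).bind κ`. -/
noncomputable def kIter {S : Type*} [MeasurableSpace S] (κ : ProbabilityTheory.Kernel S S) :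
    ℕ → Measure S → Measure S
  | 0, μ => μ
  | n + 1, μ => (kIter κ n μ).bind (fun x => κ x)

/-- The `n`-th iterate of the dual operator: `Uⁿf(x) = ∫ f d(Pⁿδₓ)`. -/
noncomputable def kDual {S : Type*} [MeasurableSpace S] (κ : ProbabilityTheory.Kernel S S)
    (n : ℕ) (f : S → ℝ) (x : S) : ℝ :=
  ∫ y, f y ∂(kIter κ n (Measure.dirac x))

/-- A real-valued function is bounded. -/
def IsBddFun {S : Type*} (f : S → ℝ) : Prop := ∃ C : ℝ, ∀ x, |f x| ≤ C

/-- The Feller property: the dual operator maps bounded continuous functions to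
continuous functions. -/
def IsFeller {S : Type*} [MeasurableSpace S] [TopologicalSpace S]
    (κ : ProbabilityTheory.Kernel S S) : Prop :=
  ∀ f : S → ℝ, Continuous f → IsBddFun f → Continuous (fun x => ∫ y, f y ∂(κ x))

/-- Asymptotic stability: `μst` is an invariant probability measure and `Pⁿμ → μst`
weakly for every Borel probability measure `μ`. -/
def IsAsympStable {S : Type*} [MeasurableSpace S] [TopologicalSpace S]
    (κ : ProbabilityTheory.Kernel S S) (μst : Measure S) : Prop :=
  IsProbabilityMeasure μst ∧ kIter κ 1 μst = μst ∧
    ∀ μ : Measure S, IsProbabilityMeasure μ → ∀ f : S → ℝ, Continuous f → IsBddFun f →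
      Tendsto (fun n => ∫ x, f x ∂(kIter κ n μ)) atTop (𝓝 (∫ x, f x ∂μst))

/-- The e-property in `C_b(S)` at a point `z`: for every bounded continuous `f`,
`sup_{n} |Uⁿf(x) − Uⁿf(z)| → 0` as `x → z`. -/
def EPropCbAt {S : Type*} [MeasurableSpace S] [TopologicalSpace S]
    (κ : ProbabilityTheory.Kernel S S) (z : S) : Prop :=
  ∀ f : S → ℝ, Continuous f → IsBddFun f →
    Tendsto (fun x => ⨆ n : ℕ, |kDual κ n f x - kDual κ n f z|) (𝓝 z) (𝓝 0)

section Envelope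

variable {S : Type*} [PseudoMetricSpace S]

/-- The `N`-Lipschitz upper envelope of the tail `|u n|`, `n ≥ N`, of a sequence of functions. -/
noncomputable def tailEnvelope (u : ℕ → S → ℝ) (N : ℕ) (x : S) : ℝ :=
  ⨆ p : S × ℕ, (|u (N + p.2) p.1| - N * dist x p.1)

variable {u : ℕ → S → ℝ} {C : ℝ}

lemma bddAbove_tailEnvelope (hu : ∀ n x, |u n x| ≤ C) (N : ℕ) (x : S) :
    BddAbove (Set.range fun p : S × ℕ => |u (N + p.2) p.1| - N * dist x p.1) := by
  refine ⟨C, ?_⟩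
  rintro _ ⟨p, rfl⟩
  have h : 0 ≤ (N : ℝ) * dist x p.1 := by positivity
  have := hu (N + p.2) p.1
  dsimp only
  linarith

lemma sub_le_tailEnvelope (hu : ∀ n x, |u n x| ≤ C) {N n : ℕ} (hn : N ≤ n) (x y : S) :
    |u n y| - N * dist x y ≤ tailEnvelope u N x := by
  obtain ⟨j, rfl⟩ := Nat.exists_eq_add_of_le hn
  exact le_ciSup (bddAbove_tailEnvelope hu N x) (y, j)

lemma abs_le_tailEnvelope (hu : ∀ n x, |u n x| ≤ C) {N n : ℕ} (hn : N ≤ n) (x : S) :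
    |u n x| ≤ tailEnvelope u N x := by
  simpa using sub_le_tailEnvelope hu hn x x

lemma tailEnvelope_nonneg (hu : ∀ n x, |u n x| ≤ C) (N : ℕ) (x : S) :
    0 ≤ tailEnvelope u N x :=
  (abs_nonneg _).trans (abs_le_tailEnvelope hu le_rfl x)

lemma tailEnvelope_le {N : ℕ} {x : S} {c : ℝ}
    (h : ∀ n y, N ≤ n → |u n y| - N * dist x y ≤ c) : tailEnvelope u N x ≤ c :=
  haveI : Nonempty (S × ℕ) := ⟨(x, 0)⟩
  ciSup_le fun _ => h _ _ (Nat.le_add_right _ _)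

lemma tailEnvelope_le_bound (hu : ∀ n x, |u n x| ≤ C) (N : ℕ) (x : S) :
    tailEnvelope u N x ≤ C := by
  refine tailEnvelope_le fun n y _ => ?_
  have h : 0 ≤ (N : ℝ) * dist x y := by positivity
  linarith [hu n y]

lemma antitone_tailEnvelope (hu : ∀ n x, |u n x| ≤ C) (x : S) :
    Antitone fun N => tailEnvelope u N x := by
  intro N M h
  refine tailEnvelope_le fun n y hn => ?_
  have h1 := sub_le_tailEnvelope hu (h.trans hn) x y
  have h2 : (N : ℝ) * dist x y ≤ M * dist x y := by gcongr
  linarith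

lemma continuous_tailEnvelope (hu : ∀ n x, |u n x| ≤ C) (N : ℕ) :
    Continuous (tailEnvelope u N) := by
  refine (LipschitzWith.of_le_add_mul (N : NNReal) fun x y => ?_).continuous
  refine tailEnvelope_le fun n v hn => ?_
  have h1 := sub_le_tailEnvelope hu hn y v
  have h2 : (N : ℝ) * dist y v ≤ N * (dist x y + dist x v) := by
    gcongr
    rw [dist_comm x y]
    exact dist_triangle _ _ _
  simp only [NNReal.coe_natCast]
  linarith

/-- A bound on a tail of `|u n|` near `x` bounds the envelopes of all late tails at `x`. -/
lemma eventually_tailEnvelope_le (hu : ∀ n x, |u n x| ≤ C) {x : S} {c : ℝ} (hc : 0 ≤ c) {N : ℕ}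
    (h : ∀ᶠ y in 𝓝 x, ∀ n, N ≤ n → |u n y| ≤ c) : ∀ᶠ M in atTop, tailEnvelope u M x ≤ c := by
  obtain ⟨δ, hδ, hball⟩ := Metric.eventually_nhds_iff.1 h
  obtain ⟨K, hK⟩ := exists_nat_gt (C / δ)
  filter_upwards [eventually_ge_atTop N, eventually_ge_atTop K] with M hMN hMK
  refine tailEnvelope_le fun n y hn => ?_
  have hnn : 0 ≤ (M : ℝ) * dist x y := by positivity
  rcases lt_or_ge (dist y x) δ with hd | hd
  · linarith [hball hd n (hMN.trans hn)]
  · have h1 : C < K * δ := (div_lt_iff₀ hδ).1 hK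
    have h2 : (K : ℝ) * δ ≤ M * dist x y := by
      rw [dist_comm x y]
      gcongr
    linarith [hu n y]

end Envelope

section Operator

variable {S : Type*} [MeasurableSpace S] {κ : Kernel S S} [IsMarkovKernel κ]

instance isProbabilityMeasure_kIter (n : ℕ) (μ : Measure S) [IsProbabilityMeasure μ] :
    IsProbabilityMeasure (kIter κ n μ) := by
  induction n with
  | zero => assumption
  | succ n ih =>
    rw [kIter]
    infer_instance

variable [TopologicalSpace S] [OpensMeasurableSpace S]

/-- The dual operator of a Feller kernel, acting on bounded continuous functions. -/
noncomputable def fellerDual (hκ : IsFeller κ) (f : BoundedContinuousFunction S ℝ) :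
    BoundedContinuousFunction S ℝ :=
  BoundedContinuousFunction.ofNormedAddCommGroup (fun x => ∫ y, f y ∂(κ x))
    (hκ f f.continuous ⟨‖f‖, f.norm_coe_le_norm⟩) ‖f‖ fun x => by
      simpa using f.norm_integral_le_norm (κ x)

lemma integral_kIter (hκ : IsFeller κ) (n : ℕ) (μ : Measure S) [IsProbabilityMeasure μ]
    (f : BoundedContinuousFunction S ℝ) :
    ∫ x, f x ∂(kIter κ n μ) = ∫ x, (fellerDual hκ)^[n] f x ∂μ := by
  induction n generalizing f with
  | zero => rfl
  | succ n ih =>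
    rw [Function.iterate_succ_apply, ← ih, kIter]
    have hint : Integrable f ((kIter κ n μ).bind κ) := f.integrable _
    rw [Measure.comp_eq_comp_const_apply] at hint ⊢
    exact Kernel.integral_comp hint

lemma abs_kDual_le (n : ℕ) (f : BoundedContinuousFunction S ℝ) (x : S) :
    |kDual κ n f x| ≤ ‖f‖ :=
  f.norm_integral_le_norm (kIter κ n (Measure.dirac x))

variable [MeasurableSingletonClass S]

lemma kDual_eq_iterate (hκ : IsFeller κ) (n : ℕ) (f : BoundedContinuousFunction S ℝ) (x : S) :
    kDual κ n f x = (fellerDual hκ)^[n] f x := by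
  rw [kDual, integral_kIter hκ, integral_dirac]

lemma continuous_kDual (hκ : IsFeller κ) (n : ℕ) (f : BoundedContinuousFunction S ℝ) :
    Continuous (kDual κ n f) := by
  rw [funext (kDual_eq_iterate hκ n f)]
  exact BoundedContinuousFunction.continuous _

/-- A bound on `|Uⁿf|` propagates along further iterates of the dual operator. -/
lemma abs_kDual_add_le (hκ : IsFeller κ) {n : ℕ} {f h : BoundedContinuousFunction S ℝ}
    (hle : ∀ y, |kDual κ n f y| ≤ h y) (k : ℕ) (x : S) :
    |kDual κ (n + k) f x| ≤ kDual κ k h x := by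
  have key : kDual κ (n + k) f x = kDual κ k ((fellerDual hκ)^[n] f) x := by
    rw [kDual_eq_iterate hκ, kDual_eq_iterate hκ, ← Function.iterate_add_apply, add_comm]
  rw [key]
  refine (abs_integral_le_integral_abs).trans
    (integral_mono ((BoundedContinuousFunction.integrable _ _).abs) (h.integrable _) fun y => ?_)
  simpa only [kDual_eq_iterate hκ] using hle y

end Operator

section Stability

variable {S : Type*} [MetricSpace S] [MeasurableSpace S] [BorelSpace S]
  {κ : Kernel S S} [IsMarkovKernel κ]

/-- The limit of the tail envelopes of `Uⁿg` is dominated everywhere by its own integral against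
the invariant measure. -/
lemma iInf_tailEnvelope_le_integral (hκ : IsFeller κ) {μ : Measure S} (hstab : IsAsympStable κ μ)
    (g : BoundedContinuousFunction S ℝ) (w : S) :
    ⨅ N, tailEnvelope (fun n => kDual κ n g) N w ≤
      ∫ x, ⨅ N, tailEnvelope (fun n => kDual κ n g) N x ∂μ := by
  have := hstab.1
  have hu : ∀ n x, |kDual κ n g x| ≤ ‖g‖ := fun n x => abs_kDual_le n g x
  set F := tailEnvelope (fun n => kDual κ n g) with hF
  have hbdd : ∀ x, BddBelow (Set.range fun N => F N x) := fun x =>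
    ⟨0, by rintro _ ⟨N, rfl⟩; exact tailEnvelope_nonneg hu N x⟩
  have hFabs : ∀ N x, |F N x| ≤ ‖g‖ := fun N x => by
    rw [abs_of_nonneg (tailEnvelope_nonneg hu N x)]
    exact tailEnvelope_le_bound hu N x
  let Fb : ℕ → BoundedContinuousFunction S ℝ := fun N =>
    BoundedContinuousFunction.ofNormedAddCommGroup (F N) (continuous_tailEnvelope hu N) ‖g‖
      (hFabs N)
  have hstep : ∀ N k, ⨅ N, F N w ≤ kDual κ k (F N) w := by
    intro N k
    refine le_of_forall_pos_le_add fun η hη => ?_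
    have hnear : ∀ᶠ y in 𝓝 w, kDual κ k (Fb N) y < kDual κ k (Fb N) w + η :=
      (continuous_kDual hκ k (Fb N)).continuousAt.eventually_lt continuousAt_const (by linarith)
    have hnonneg : 0 ≤ kDual κ k (F N) w := integral_nonneg fun x => tailEnvelope_nonneg hu N x
    have hev := eventually_tailEnvelope_le hu (x := w) (c := kDual κ k (F N) w + η)
      (by linarith) (N := N + k) (by
        filter_upwards [hnear] with y hy n hn
        obtain ⟨j, rfl⟩ := Nat.exists_eq_add_of_le hn
        have := abs_kDual_add_le hκ (n := N + j) (f := g) (h := Fb N)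
          (fun v => abs_le_tailEnvelope hu (Nat.le_add_right N j) v) k y
        rw [add_right_comm]
        exact this.trans hy.le)
    obtain ⟨M, hM⟩ := hev.exists
    exact (ciInf_le (hbdd w) M).trans hM
  have hN : ∀ N, ⨅ N, F N w ≤ ∫ x, F N x ∂μ := fun N =>
    ge_of_tendsto' (hstab.2.2 (Measure.dirac w) inferInstance (F N)
      (continuous_tailEnvelope hu N) ⟨‖g‖, hFabs N⟩) (hstep N)
  refine ge_of_tendsto' (tendsto_integral_of_dominated_convergence (fun _ => ‖g‖)
    (fun N => (continuous_tailEnvelope hu N).aestronglyMeasurable) (integrable_const _)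
    (fun N => ae_of_all _ (hFabs N)) (ae_of_all _ fun x => ?_)) hN
  exact tendsto_atTop_ciInf (antitone_tailEnvelope hu x) (hbdd x)

/-- A uniform late-time bound on `|Uⁿg|` near one point of the support of the invariant measure
yields the same bound, up to `η`, near every point. -/
lemma eventually_abs_kDual_lt (hκ : IsFeller κ) {μ : Measure S} (hstab : IsAsympStable κ μ)
    (g : BoundedContinuousFunction S ℝ) {z : S} (hz : ∀ ε > 0, 0 < μ (Metric.ball z ε))
    {c : ℝ} (hc : 0 ≤ c) {N : ℕ} (hnear : ∀ᶠ y in 𝓝 z, ∀ n, N ≤ n → |kDual κ n g y| ≤ c)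
    {η : ℝ} (hη : c < η) (w : S) :
    ∃ M, ∀ᶠ y in 𝓝 w, ∀ n, M ≤ n → |kDual κ n g y| < η := by
  have := hstab.1
  have hu : ∀ n x, |kDual κ n g x| ≤ ‖g‖ := fun n x => abs_kDual_le n g x
  have hdom := iInf_tailEnvelope_le_integral hκ hstab g
  set F := tailEnvelope (fun n => kDual κ n g) with hF
  have hbdd : ∀ x, BddBelow (Set.range fun N => F N x) := fun x =>
    ⟨0, by rintro _ ⟨N, rfl⟩; exact tailEnvelope_nonneg hu N x⟩
  set L : S → ℝ := fun x => ⨅ N, F N x with hL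
  have hLnonneg : ∀ x, 0 ≤ L x := fun x => le_ciInf fun N => tailEnvelope_nonneg hu N x
  have hLle : ∀ x, L x ≤ ‖g‖ := fun x => (ciInf_le (hbdd x) 0).trans (tailEnvelope_le_bound hu 0 x)
  have hLint : Integrable L μ := by
    refine Integrable.of_bound (C := ‖g‖) ?_ (ae_of_all _ fun x => ?_)
    · exact (Measurable.iInf fun N =>
        (continuous_tailEnvelope hu N).measurable).aestronglyMeasurable
    · rw [Real.norm_of_nonneg (hLnonneg x)]
      exact hLle x
  have hae : L =ᵐ[μ] fun _ => ∫ x, L x ∂μ :=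
    (integral_eq_iff_of_ae_le hLint (integrable_const _) (ae_of_all _ hdom)).1 (by simp)
  have hLz : ∀ᶠ y in 𝓝 z, L y ≤ c := by
    filter_upwards [eventually_eventually_nhds.2 hnear] with y hy
    obtain ⟨M, hM⟩ := (eventually_tailEnvelope_le hu hc hy).exists
    exact (ciInf_le (hbdd y) M).trans hM
  obtain ⟨r, hr, hball⟩ := Metric.eventually_nhds_iff_ball.1 hLz
  obtain ⟨y, hy, hyL⟩ : ∃ y ∈ Metric.ball z r, L y = ∫ x, L x ∂μ := by
    by_contra! hne
    exact (hz r hr).ne' (measure_mono_null hne (ae_iff.1 hae))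
  have hw : L w < η := (hdom w).trans_lt (hyL ▸ (hball y hy).trans_lt hη)
  obtain ⟨M, hM⟩ := exists_lt_of_ciInf_lt hw
  refine ⟨M, ?_⟩
  filter_upwards [(continuous_tailEnvelope hu M).continuousAt.eventually_lt
    continuousAt_const hM] with y hy n hn
  exact (abs_le_tailEnvelope hu hn y).trans_lt hy

end Stability

/-- If an asymptotically stable Markov–Feller operator on a Polish metric space has the
e-property in `C_b(S)` at some point of the support of its invariant measure, then it has the
e-property in `C_b(S)` at every point of `S`. -/
theorem eProp_everywhere_of_eProp_at_support_point
    {S : Type*} [MetricSpace S] [CompleteSpace S] [SecondCountableTopology S]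
    [MeasurableSpace S] [BorelSpace S]
    (κ : ProbabilityTheory.Kernel S S) [IsMarkovKernel κ]
    (hFeller : IsFeller κ) (μst : Measure S) (hstab : IsAsympStable κ μst)
    (z : S) (hz : ∀ ε > 0, 0 < μst (Metric.ball z ε)) (hEz : EPropCbAt κ z) :
    ∀ w : S, EPropCbAt κ w := by
  have := hstab.1
  intro w f hf hfb
  obtain ⟨C, hC⟩ := hfb
  let fb : BoundedContinuousFunction S ℝ :=
    BoundedContinuousFunction.ofNormedAddCommGroup f hf C hC
  set c : ℝ := ∫ x, f x ∂μst with hc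
  let g : BoundedContinuousFunction S ℝ := fb - BoundedContinuousFunction.const S c
  have hg : ∀ n x, kDual κ n g x = kDual κ n f x - c := by
    intro n x
    change ∫ y, (fb y - c) ∂_ = ∫ y, fb y ∂_ - c
    rw [integral_sub (fb.integrable _) (integrable_const _)]
    simp
  have hbdd : ∀ x v, BddAbove (Set.range fun n => |kDual κ n f x - kDual κ n f v|) := by
    intro x v
    refine ⟨‖fb‖ + ‖fb‖, ?_⟩
    rintro _ ⟨n, rfl⟩
    exact (abs_sub _ _).trans (add_le_add (abs_kDual_le n fb x) (abs_kDual_le n fb v))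
  have hlate : ∀ η > 0, ∃ M, ∀ᶠ y in 𝓝 w, ∀ n, M ≤ n → |kDual κ n f y - c| < η := by
    intro η hη
    have hconv := hstab.2.2 (Measure.dirac z) inferInstance f hf ⟨C, hC⟩
    obtain ⟨N, hN⟩ := Metric.tendsto_atTop.1 hconv (η / 4) (by linarith)
    have hE := (hEz f hf ⟨C, hC⟩).eventually_lt_const (show (0 : ℝ) < η / 4 by linarith)
    have hnear : ∀ᶠ y in 𝓝 z, ∀ n, N ≤ n → |kDual κ n g y| ≤ η / 2 := by
      filter_upwards [hE] with y hy n hn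
      have h1 := (le_ciSup (hbdd y z) n).trans_lt hy
      have h2 : |kDual κ n f z - c| < η / 4 := hN n hn
      rw [hg]
      linarith [abs_sub_le (kDual κ n f y) (kDual κ n f z) c]
    simpa only [hg] using eventually_abs_kDual_lt hFeller hstab g hz (by linarith) hnear
      (show η / 2 < η by linarith) w
  rw [Metric.tendsto_nhds]
  intro ε hε
  obtain ⟨M, hM⟩ := hlate (ε / 4) (by linarith)
  have hearly : ∀ᶠ y in 𝓝 w, ∀ n ∈ Finset.range M, |kDual κ n f y - kDual κ n f w| < ε / 2 := by
    rw [Filter.eventually_all_finset]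
    intro n _
    exact Metric.tendsto_nhds.1 (continuous_kDual hFeller n fb).continuousAt (ε / 2) (by linarith)
  filter_upwards [hM, hearly] with y hy hy'
  have hsup : ⨆ n, |kDual κ n f y - kDual κ n f w| ≤ ε / 2 := by
    refine ciSup_le fun n => ?_
    rcases lt_or_ge n M with hn | hn
    · exact (hy' n (Finset.mem_range.2 hn)).le
    · have h1 := hy n hn
      have h2 := hM.self_of_nhds n hn
      rw [abs_sub_comm] at h2
      linarith [abs_sub_le (kDual κ n f y) c (kDual κ n f w)]
  rw [Real.dist_0_eq_abs, abs_of_nonneg (Real.iSup_nonneg fun n => abs_nonneg _)]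
  linarith
end

section
/- Let S be a Polish metric space and let P be an asymptotically stable regular Markov operator on S with invariant probability measure μ*, which has the e-property in L_FM(S) at a point z ∈ S, and let (x_m) be a sequence in S converging to z. Then the family of probability measures M = {μ*} ∪ {Pⁿδ_z : n ∈ ℕ} ∪ {Pⁿδ_{x_m} : n, m ∈ ℕ} is tight: for every ε > 0 there exists a compact set K ⊆ S such that μ(S \ K) ≤ ε for every μ ∈ M. -/
open MeasureTheory ProbabilityTheory Filter Topology

/-- The e-property in `L_FM(S)` (1-Lipschitz functions with values in `[0,1]`) at a point
`z`: for every such `f`, `sup_{n} |Uⁿf(x) − Uⁿf(z)| → 0` as `x → z`. -/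
def EPropFMAt {S : Type*} [MeasurableSpace S] [PseudoMetricSpace S]
    (κ : ProbabilityTheory.Kernel S S) (z : S) : Prop :=
  ∀ f : S → ℝ, LipschitzWith 1 f → (∀ x, f x ∈ Set.Icc (0 : ℝ) 1) →
    Tendsto (fun x => ⨆ n : ℕ, |kDual κ n f x - kDual κ n f z|) (𝓝 z) (𝓝 0)

open scoped OnePoint

instance OnePoint.firstCountableTopology_nat : FirstCountableTopology (OnePoint ℕ) where
  nhds_generated_countable := by
    refine OnePoint.rec ?_ fun n => ?_
    · rw [OnePoint.nhds_infty_eq, coclosedCompact_eq_cocompact, cocompact_eq_cofinite,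
        Nat.cofinite_eq_atTop]
      infer_instance
    · rw [OnePoint.nhds_coe_eq]
      infer_instance

lemma isProbabilityMeasure_kIter_s11 {S : Type*} [MeasurableSpace S] (κ : Kernel S S)
    [IsMarkovKernel κ] (n : ℕ) (μ : Measure S) [IsProbabilityMeasure μ] :
    IsProbabilityMeasure (kIter κ n μ) := by
  induction n with
  | zero => assumption
  | succ n ih => exact inferInstanceAs (IsProbabilityMeasure ((kIter κ n μ).bind κ))

/-- Weak convergence of probability measures can be tested on `1`-Lipschitz functions with values
in `[0, 1]`. -/
lemma tendsto_probabilityMeasure_of_forall_lipschitzWith_one {γ Ω : Type*} [MeasurableSpace Ω]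
    [PseudoMetricSpace Ω] [OpensMeasurableSpace Ω] {F : Filter γ} [F.IsCountablyGenerated]
    {μs : γ → ProbabilityMeasure Ω} {μ : ProbabilityMeasure Ω}
    (h : ∀ f : Ω → ℝ, LipschitzWith 1 f → (∀ x, f x ∈ Set.Icc (0 : ℝ) 1) →
      Tendsto (fun i => ∫ ω, f ω ∂(μs i : Measure Ω)) F (𝓝 (∫ ω, f ω ∂(μ : Measure Ω)))) :
    Tendsto μs F (𝓝 μ) := by
  refine tendsto_iff_forall_lipschitz_integral_tendsto.2 ?_
  rintro f ⟨C, hC⟩ ⟨L, hL⟩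
  have : Nonempty Ω := μ.nonempty
  let a : Ω := Classical.arbitrary Ω
  have hC0 : 0 ≤ C := dist_nonneg.trans (hC a a)
  have hD : 0 < 2 * C + L + 1 := by positivity
  set D : ℝ := 2 * C + L + 1 with hDdef
  have hL' (x y : Ω) : |f x - f y| ≤ L * dist x y := by
    simpa [Real.dist_eq] using hL.dist_le_mul x y
  let g : Ω → ℝ := fun x => (f x - f a + C) / D
  have hg : LipschitzWith 1 g := by
    refine LipschitzWith.of_dist_le_mul fun x y => ?_
    have hgxy : g x - g y = (f x - f y) / D := by simp only [g]; ring
    rw [Real.dist_eq, hgxy, abs_div, abs_of_pos hD, div_le_iff₀ hD]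
    calc |f x - f y| ≤ L * dist x y := hL' x y
      _ ≤ D * dist x y := by gcongr; linarith
      _ = _ := by simp [mul_comm]
  have hg01 (x : Ω) : g x ∈ Set.Icc (0 : ℝ) 1 := by
    have hx := abs_le.1 (by simpa [Real.dist_eq] using hC x a)
    have hL0 : (0 : ℝ) ≤ L := L.2
    exact ⟨div_nonneg (by linarith) hD.le, (div_le_one hD).2 (by linarith)⟩
  have hint (ν : ProbabilityMeasure Ω) :
      ∫ ω, f ω ∂(ν : Measure Ω) = D * ∫ ω, g ω ∂(ν : Measure Ω) + (f a - C) := by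
    have hgi : Integrable g (ν : Measure Ω) :=
      .of_mem_Icc 0 1 hg.continuous.measurable.aemeasurable (.of_forall hg01)
    have hfg : f = fun x => D * g x + (f a - C) := by
      ext x
      simp only [g]
      field_simp
      ring
    conv_lhs => rw [hfg]
    rw [integral_add (hgi.const_mul D) (integrable_const _), integral_const_mul]
    simp
  simp_rw [hint]
  exact ((h g hg hg01).const_mul D).add_const _

/-- The time-`n` law of the chain started at `y`, for `n ≤ ∞`, where the law at `∞` is `μst`. -/
noncomputable def extendedLaw {S : Type*} [MeasurableSpace S] (κ : Kernel S S)
    [IsMarkovKernel κ] (μst : ProbabilityMeasure S) (y : S) (n : OnePoint ℕ) :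
    ProbabilityMeasure S :=
  n.elim μst fun k => ⟨kIter κ k (Measure.dirac y), isProbabilityMeasure_kIter_s11 κ k _⟩

section

variable {S : Type*} [MetricSpace S] [MeasurableSpace S] {κ : Kernel S S}
  [IsMarkovKernel κ] {μst : ProbabilityMeasure S} {z : S}

lemma IsAsympStable.continuous_extendedLaw [BorelSpace S]
    (hstab : IsAsympStable κ (μst : Measure S)) (y : S) :
    Continuous (extendedLaw κ μst y) := by
  rw [OnePoint.continuous_iff_from_nat, ProbabilityMeasure.tendsto_iff_forall_integral_tendsto]
  intro f
  exact hstab.2.2 (Measure.dirac y) inferInstance f f.continuous ⟨‖f‖, f.norm_coe_le_norm⟩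

/-- The e-property at `z` makes the integrals of a test function against the laws of the chain
equicontinuous at `z`, uniformly in the (possibly infinite) time. -/
lemma EPropFMAt.tendstoUniformly_integral (hEz : EPropFMAt κ z) {f : S → ℝ}
    (hf : LipschitzWith 1 f) (hf01 : ∀ x, f x ∈ Set.Icc (0 : ℝ) 1) :
    TendstoUniformly (fun y n => ∫ s, f s ∂(extendedLaw κ μst y n : Measure S))
      (fun n => ∫ s, f s ∂(extendedLaw κ μst z n : Measure S)) (𝓝 z) := by
  rw [Metric.tendstoUniformly_iff]
  intro ε hε
  have hdual (n : ℕ) (y : S) : kDual κ n f y ∈ Set.Icc (0 : ℝ) 1 := by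
    have := isProbabilityMeasure_kIter_s11 κ n (Measure.dirac y)
    refine ⟨integral_nonneg fun s => (hf01 s).1, ?_⟩
    refine (integral_mono_of_nonneg (.of_forall fun s => (hf01 s).1) (integrable_const 1)
      (.of_forall fun s => (hf01 s).2)).trans ?_
    simp
  filter_upwards [(hEz f hf hf01).eventually_lt_const hε] with y hy
  refine OnePoint.rec ?_ fun n => ?_
  · exact (dist_self (∫ s, f s ∂(μst : Measure S))).trans_lt hε
  · have hbdd : BddAbove (Set.range fun n : ℕ => |kDual κ n f y - kDual κ n f z|) := by
      refine ⟨1, Set.forall_mem_range.2 fun n => abs_sub_le_iff.2 ?_⟩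
      have h₁ := hdual n y
      have h₂ := hdual n z
      exact ⟨by linarith [h₁.2, h₂.1], by linarith [h₁.1, h₂.2]⟩
    rw [dist_comm]
    exact (le_ciSup hbdd n).trans_lt hy

/-- If the chain is asymptotically stable with the e-property at `z`, its law depends jointly
continuously on the extended time and on the index of a sequence of starting points with
limit `z`. -/
lemma continuous_extendedLaw_uncurry [BorelSpace S] (hstab : IsAsympStable κ (μst : Measure S))
    (hEz : EPropFMAt κ z) {x : OnePoint ℕ → S} (hx : Continuous x) (hxz : x ∞ = z) :
    Continuous fun p : OnePoint ℕ × OnePoint ℕ => extendedLaw κ μst (x p.1) p.2 := by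
  rw [continuous_iff_continuousAt]
  rintro ⟨m, n⟩
  induction m using OnePoint.rec with
  | coe m =>
    have hm : 𝓝 ((m : OnePoint ℕ), n) = pure (m : OnePoint ℕ) ×ˢ 𝓝 n := by
      rw [nhds_prod_eq, OnePoint.nhds_coe_eq, nhds_discrete, map_pure]
    rw [ContinuousAt, hm, pure_prod, tendsto_map'_iff]
    exact (hstab.continuous_extendedLaw (x m)).tendsto n
  | infty =>
    refine tendsto_probabilityMeasure_of_forall_lipschitzWith_one fun f hf hf01 => ?_
    have hunif := hEz.tendstoUniformly_integral (μst := μst) hf hf01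
    have hcont : Continuous fun k => ∫ s, f s ∂(extendedLaw κ μst z k : Measure S) := by
      let F : BoundedContinuousFunction S ℝ :=
        .mkOfBound ⟨f, hf.continuous⟩ 1 fun s t => Real.dist_le_of_mem_Icc_01 (hf01 s) (hf01 t)
      exact continuous_iff_continuousAt.2 fun k =>
        ProbabilityMeasure.tendsto_iff_forall_integral_tendsto.1
          ((hstab.continuous_extendedLaw z).tendsto k) F
    have hx' : Tendsto x (𝓝 ∞) (𝓝 z) := hxz ▸ hx.tendsto ∞
    rw [Metric.tendsto_nhds]
    intro ε hε
    rw [nhds_prod_eq]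
    have hfst := hx'.eventually (Metric.tendstoUniformly_iff.1 hunif (ε / 2) (half_pos hε))
    have hsnd := Metric.tendsto_nhds.1 (hcont.tendsto n) (ε / 2) (half_pos hε)
    filter_upwards [hfst.prod_mk hsnd] with p hp
    rw [hxz]
    refine (dist_triangle_left _ _ _).trans_lt ((add_lt_add (hp.1 p.2) hp.2).trans_eq ?_)
    exact add_halves ε

end

/-- For an asymptotically stable regular Markov operator with the e-property in `L_FM(S)` at
`z`, and a sequence `xₘ → z`, the family
`{μst} ∪ {Pⁿδ_z : n} ∪ {Pⁿδ_{xₘ} : n, m}` is tight. -/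
theorem tight_family_of_ePropFM
    {S : Type*} [MetricSpace S] [CompleteSpace S] [SecondCountableTopology S]
    [MeasurableSpace S] [BorelSpace S]
    (κ : ProbabilityTheory.Kernel S S) [IsMarkovKernel κ]
    (μst : Measure S) (hstab : IsAsympStable κ μst)
    (z : S) (hEz : EPropFMAt κ z)
    (x : ℕ → S) (hx : Tendsto x atTop (𝓝 z)) :
    ∀ ε > (0 : ℝ), ∃ K : Set S, IsCompact K ∧
      ∀ μ ∈ ({μst} ∪ {ν | ∃ n : ℕ, ν = kIter κ n (Measure.dirac z)} ∪
          {ν | ∃ n m : ℕ, ν = kIter κ n (Measure.dirac (x m))} : Set (Measure S)),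
        μ Kᶜ ≤ ENNReal.ofReal ε := by
  let μ₀ : ProbabilityMeasure S := ⟨μst, hstab.1⟩
  let y : C(OnePoint ℕ, S) := OnePoint.continuousMapMkNat x z hx
  have hcont : Continuous fun p : OnePoint ℕ × OnePoint ℕ => extendedLaw κ μ₀ (y p.1) p.2 :=
    continuous_extendedLaw_uncurry hstab hEz y.continuous rfl
  have htight := isTightMeasureSet_of_isCompact_closure (isCompact_range hcont).closure
  intro ε hε
  obtain ⟨K, hK, hKε⟩ := isTightMeasureSet_iff_exists_isCompact_measure_compl_le.1 htight
    (ENNReal.ofReal ε) (ENNReal.ofReal_pos.2 hε)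
  refine ⟨K, hK, ?_⟩
  rintro μ ((rfl | ⟨n, rfl⟩) | ⟨n, m, rfl⟩)
  · exact hKε _ ⟨_, ⟨(∞, ∞), rfl⟩, rfl⟩
  · exact hKε _ ⟨_, ⟨(∞, n), rfl⟩, rfl⟩
  · exact hKε _ ⟨_, ⟨(m, n), rfl⟩, rfl⟩
end

section
/- Let S be the circle ℝ/ℤ and let P be the Markov operator generated by π(y,·) = δ_{2y} for y ∈ [0,1/2) and π(y,·) = (1/2)δ_0 + (1/2)δ_{2y−1} for y ∈ [1/2,1). Then P has the e-property in C_b(S) at every point z whose binary expansion z = Σ_{i≥1} e_i(z)/2^i contains infinitely many digits equal to 1 (i.e., z is not a dyadic rational); that is, for every such z and every bounded continuous f : S → ℝ, lim_{x→z} sup_{n∈ℕ} |Uⁿf(x) − Uⁿf(z)| = 0. -/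
open MeasureTheory Filter Topology

/-- The representative in `[0,1)` of a point of the circle `ℝ/ℤ`. -/
noncomputable def circleRep (x : UnitAddCircle) : ℝ :=
  ((AddCircle.equivIco (1 : ℝ) 0) x : ℝ)

/-- The transition probability function `π(y,·) = δ_{2y}` for `y ∈ [0,1/2)` and
`π(y,·) = (1/2)δ₀ + (1/2)δ_{2y−1}` for `y ∈ [1/2,1)` (arithmetic modulo 1, so that
`δ_{2y−1} = δ_{2y}` on the circle). -/
noncomputable def circleKer (y : UnitAddCircle) : Measure UnitAddCircle :=
  if circleRep y < 1 / 2 then Measure.dirac (y + y)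
  else (1 / 2 : ENNReal) • Measure.dirac (0 : UnitAddCircle) +
    (1 / 2 : ENNReal) • Measure.dirac (y + y)

/-- The `n`-step evolution of a measure under the Markov operator generated by
`circleKer`. -/
noncomputable def circleP : ℕ → Measure UnitAddCircle → Measure UnitAddCircle
  | 0, μ => μ
  | n + 1, μ => (circleP n μ).bind circleKer

/-- The `n`-th iterate of the dual operator: `Uⁿf(x) = ∫ f d(Pⁿδₓ)`. -/
noncomputable def circleU (n : ℕ) (f : UnitAddCircle → ℝ) (x : UnitAddCircle) : ℝ :=
  ∫ y, f y ∂(circleP n (Measure.dirac x))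

/-- The `i`-th binary digit `e_{i+1}(x)` of a real number `x ∈ [0,1)` (the expansion with
infinitely many digits equal to `0`). -/
noncomputable def binDigit (x : ℝ) (i : ℕ) : ℕ := (⌊x * 2 ^ (i + 1)⌋).toNat % 2

/-- The probability that one step of the chain started at `y` follows the doubling map. -/
noncomputable def doublingProb (y : UnitAddCircle) : ℝ :=
  if circleRep y < 1 / 2 then 1 else 1 / 2

/-- The probability that the first `n` steps of the chain started at `x` all follow the
doubling map. -/
noncomputable def doublingWeight (n : ℕ) (x : UnitAddCircle) : ℝ :=
  ∏ k ∈ Finset.range n, doublingProb (2 ^ k • x)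

lemma circleRep_coe (t : ℝ) : circleRep (t : UnitAddCircle) = Int.fract t := by
  have h := AddCircle.coe_equivIco_mk_apply (p := (1 : ℝ)) t
  rw [div_one, mul_one] at h
  exact h

lemma coe_circleRep (x : UnitAddCircle) : ((circleRep x : ℝ) : UnitAddCircle) = x :=
  (AddCircle.equivIco (1 : ℝ) 0).symm_apply_apply x

lemma circleRep_zero : circleRep 0 = 0 := by
  simpa using circleRep_coe 0

lemma circleRep_two_pow_nsmul (i : ℕ) (z : UnitAddCircle) :
    circleRep (2 ^ i • z) = Int.fract (circleRep z * 2 ^ i) := by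
  rw [← circleRep_coe]
  congr 1
  conv_lhs => rw [← coe_circleRep z]
  rw [← AddCircle.coe_nsmul, nsmul_eq_mul, mul_comm]
  push_cast
  rfl

lemma measurable_circleRep : Measurable circleRep :=
  measurable_subtype_coe.comp (AddCircle.measurableEquivIco (1 : ℝ) 0).measurable

lemma measurable_circleKer : Measurable circleKer := by
  have hdouble : Measurable fun y : UnitAddCircle => Measure.dirac (y + y) :=
    Measure.measurable_dirac.comp (by fun_prop)
  refine Measurable.ite (measurableSet_lt measurable_circleRep measurable_const) hdouble ?_
  refine Measure.measurable_of_measurable_coe _ fun s hs => ?_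
  simp only [Measure.add_apply, Measure.smul_apply, smul_eq_mul]
  exact (((Measure.measurable_coe hs).comp hdouble).const_mul _).const_add _

lemma doublingProb_pos (y : UnitAddCircle) : 0 < doublingProb y := by
  unfold doublingProb; split_ifs <;> norm_num

lemma doublingProb_le_one (y : UnitAddCircle) : doublingProb y ≤ 1 := by
  unfold doublingProb; split_ifs <;> norm_num

lemma doublingWeight_pos (n : ℕ) (x : UnitAddCircle) : 0 < doublingWeight n x :=
  Finset.prod_pos fun _ _ => doublingProb_pos _

lemma doublingWeight_succ (n : ℕ) (x : UnitAddCircle) :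
    doublingWeight (n + 1) x = doublingWeight n x * doublingProb (2 ^ n • x) :=
  Finset.prod_range_succ _ _

lemma antitone_doublingWeight (x : UnitAddCircle) : Antitone fun n => doublingWeight n x :=
  antitone_nat_of_succ_le fun n => by
    rw [doublingWeight_succ]
    exact mul_le_of_le_one_right (doublingWeight_pos n x).le (doublingProb_le_one _)

lemma doublingWeight_le_one (n : ℕ) (x : UnitAddCircle) : doublingWeight n x ≤ 1 :=
  Finset.prod_le_one (fun _ _ => (doublingProb_pos _).le) fun _ _ => doublingProb_le_one _

lemma circleKer_eq (y : UnitAddCircle) :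
    circleKer y = ENNReal.ofReal (1 - doublingProb y) • Measure.dirac 0 +
      ENNReal.ofReal (doublingProb y) • Measure.dirac (y + y) := by
  have half : ENNReal.ofReal (1 / 2) = 1 / 2 := by
    rw [ENNReal.ofReal_div_of_pos two_pos]; simp
  unfold circleKer doublingProb
  split_ifs
  · simp
  · rw [show (1 : ℝ) - 1 / 2 = 1 / 2 by norm_num, half]

lemma circleKer_zero : circleKer 0 = Measure.dirac 0 := by
  simp [circleKer, circleRep_zero]

lemma circleP_dirac (n : ℕ) (x : UnitAddCircle) :
    circleP n (Measure.dirac x) =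
      ENNReal.ofReal (1 - doublingWeight n x) • Measure.dirac 0 +
        ENNReal.ofReal (doublingWeight n x) • Measure.dirac (2 ^ n • x) := by
  induction n with
  | zero => simp [circleP, doublingWeight]
  | succ n ih =>
    have hw := doublingWeight_pos n x
    have hw1 := doublingWeight_le_one n x
    have hp := doublingProb_pos (2 ^ n • x)
    have hp1 := doublingProb_le_one (2 ^ n • x)
    ext s hs
    rw [circleP, ih, Measure.bind_apply hs measurable_circleKer.aemeasurable,
      lintegral_add_measure, lintegral_smul_measure, lintegral_smul_measure,
      lintegral_dirac, lintegral_dirac, circleKer_zero, circleKer_eq (2 ^ n • x),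
      ← two_nsmul, smul_smul, ← pow_succ', doublingWeight_succ]
    simp only [Measure.add_apply, Measure.smul_apply, smul_eq_mul]
    rw [mul_add, ← mul_assoc, ← mul_assoc, ← ENNReal.ofReal_mul hw.le,
      ← ENNReal.ofReal_mul hw.le, ← add_assoc, ← add_mul,
      ← ENNReal.ofReal_add (by linarith) (mul_nonneg hw.le (by linarith))]
    congr 3
    ring_nf

lemma circleU_eq (n : ℕ) (f : UnitAddCircle → ℝ) (x : UnitAddCircle) :
    circleU n f x =
      (1 - doublingWeight n x) * f 0 + doublingWeight n x * f (2 ^ n • x) := by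
  have hint (a : UnitAddCircle) : Integrable f (Measure.dirac a) :=
    integrable_dirac (by simp)
  rw [circleU, circleP_dirac, integral_add_measure
    ((hint _).smul_measure ENNReal.ofReal_ne_top) ((hint _).smul_measure ENNReal.ofReal_ne_top),
    integral_smul_measure, integral_smul_measure, integral_dirac, integral_dirac,
    ENNReal.toReal_ofReal (sub_nonneg.2 (doublingWeight_le_one n x)),
    ENNReal.toReal_ofReal (doublingWeight_pos n x).le, smul_eq_mul, smul_eq_mul]

lemma doublingProb_eq_half_of_binDigit_eq_one {z : UnitAddCircle} {i : ℕ}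
    (h : binDigit (circleRep z) i = 1) : doublingProb (2 ^ i • z) = 1 / 2 := by
  unfold doublingProb
  rw [circleRep_two_pow_nsmul, if_neg]
  intro hlt
  unfold binDigit at h
  rw [pow_succ, ← mul_assoc] at h
  set t := circleRep z * 2 ^ i
  have hfloor : ⌊t * 2⌋ = 2 * ⌊t⌋ := by
    rw [Int.floor_eq_iff]
    have h0 := Int.fract_nonneg t
    have h1 := Int.floor_add_fract t
    push_cast
    constructor <;> linarith
  omega

/-- A point with infinitely many binary digits equal to `1` is never mapped to `0` by an
iterate of the doubling map. -/
lemma two_pow_nsmul_ne_zero {z : UnitAddCircle}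
    (hz : {i : ℕ | binDigit (circleRep z) i = 1}.Infinite) (k : ℕ) : 2 ^ k • z ≠ 0 := by
  intro h
  obtain ⟨i, hi, hki⟩ := hz.exists_gt k
  have hp := doublingProb_eq_half_of_binDigit_eq_one hi
  obtain ⟨j, rfl⟩ := Nat.exists_eq_add_of_lt hki
  rw [add_assoc, pow_add, mul_comm, mul_nsmul', h, smul_zero, doublingProb, circleRep_zero] at hp
  norm_num at hp

lemma eventually_doublingProb_eq {y : UnitAddCircle} (hy : 2 • y ≠ 0) :
    ∀ᶠ x in 𝓝 y, doublingProb x = doublingProb y := by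
  have hy0 : y ≠ ((0 : ℝ) : UnitAddCircle) := by
    rintro rfl
    simp at hy
  have hhalf : circleRep y ≠ 1 / 2 := by
    intro h
    apply hy
    rw [← coe_circleRep y, h, ← AddCircle.coe_nsmul]
    simp
  have hcont : ContinuousAt circleRep y :=
    continuousAt_subtype_val.comp (AddCircle.continuousAt_equivIco (1 : ℝ) 0 hy0)
  rcases hhalf.lt_or_gt with h | h
  · filter_upwards [hcont.eventually_lt_const h] with x hx
    rw [doublingProb, doublingProb, if_pos hx, if_pos h]
  · filter_upwards [hcont.eventually_const_lt h] with x hx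
    rw [doublingProb, doublingProb, if_neg hx.not_gt, if_neg h.not_gt]

lemma eventually_doublingWeight_eq {z : UnitAddCircle} (hz : ∀ k : ℕ, 2 ^ k • z ≠ 0) (n : ℕ) :
    ∀ᶠ x in 𝓝 z, doublingWeight n x = doublingWeight n z := by
  have h : ∀ᶠ x in 𝓝 z, ∀ k ∈ Finset.range n,
      doublingProb (2 ^ k • x) = doublingProb (2 ^ k • z) := by
    rw [Filter.eventually_all_finset]
    intro k _
    have hk : 2 • (2 ^ k • z) ≠ 0 := by
      rw [smul_smul, ← pow_succ']
      exact hz (k + 1)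
    exact (continuous_nsmul (2 ^ k)).continuousAt.eventually (eventually_doublingProb_eq hk)
  filter_upwards [h] with x hx
  exact Finset.prod_congr rfl hx

lemma exists_doublingWeight_le {z : UnitAddCircle}
    (hz : {i : ℕ | binDigit (circleRep z) i = 1}.Infinite) (m : ℕ) :
    ∃ n, doublingWeight n z ≤ (1 / 2) ^ m := by
  induction m with
  | zero => exact ⟨0, by simp [doublingWeight]⟩
  | succ m ih =>
    obtain ⟨n, hn⟩ := ih
    obtain ⟨i, hi, hni⟩ := hz.exists_gt n
    refine ⟨i + 1, ?_⟩
    rw [doublingWeight_succ, doublingProb_eq_half_of_binDigit_eq_one hi, pow_succ]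
    have := antitone_doublingWeight z hni.le
    gcongr
    exact this.trans hn

lemma abs_circleU_sub_apply_zero_le {f : UnitAddCircle → ℝ} {C : ℝ} (hC : ∀ x, |f x| ≤ C)
    (n : ℕ) (x : UnitAddCircle) : |circleU n f x - f 0| ≤ doublingWeight n x * (2 * C) := by
  have heq : circleU n f x - f 0 = doublingWeight n x * (f (2 ^ n • x) - f 0) := by
    rw [circleU_eq]; ring
  rw [heq, abs_mul, abs_of_pos (doublingWeight_pos n x)]
  refine mul_le_mul_of_nonneg_left ?_ (doublingWeight_pos n x).le
  linarith [abs_sub (f (2 ^ n • x)) (f 0), hC (2 ^ n • x), hC 0]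

lemma tendsto_circleU {f : UnitAddCircle → ℝ} (hf : Continuous f) {z : UnitAddCircle}
    (hz : ∀ k : ℕ, 2 ^ k • z ≠ 0) (n : ℕ) :
    Tendsto (circleU n f) (𝓝 z) (𝓝 (circleU n f z)) := by
  have hw : Tendsto (doublingWeight n) (𝓝 z) (𝓝 (doublingWeight n z)) :=
    tendsto_nhds_of_eventually_eq (eventually_doublingWeight_eq hz n)
  have hfn : Tendsto (fun x => f (2 ^ n • x)) (𝓝 z) (𝓝 (f (2 ^ n • z))) :=
    (hf.comp (continuous_nsmul (2 ^ n))).tendsto z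
  simp_rw [funext (circleU_eq n f)]
  exact ((tendsto_const_nhds.sub hw).mul_const _).add (hw.mul hfn)

/-- The Markov operator on the circle generated by `π(y,·) = δ_{2y}` for `y ∈ [0,1/2)`,
`π(y,·) = (1/2)δ₀ + (1/2)δ_{2y−1}` for `y ∈ [1/2,1)`, has the e-property in `C_b(S)` at
every point `z` whose binary expansion contains infinitely many digits equal to `1`
(i.e. at every point which is not a dyadic rational). -/
theorem circle_eProp_at_nondyadic
    (z : UnitAddCircle) (hz : {i : ℕ | binDigit (circleRep z) i = 1}.Infinite) :
    ∀ f : UnitAddCircle → ℝ, Continuous f → (∃ C : ℝ, ∀ x, |f x| ≤ C) →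
      Tendsto (fun x => ⨆ n : ℕ, |circleU n f x - circleU n f z|) (𝓝 z) (𝓝 0) := by
  intro f hf ⟨C, hC⟩
  have hnd := two_pow_nsmul_ne_zero hz
  have hC0 : 0 ≤ C := (abs_nonneg _).trans (hC 0)
  rw [Metric.tendsto_nhds]
  intro ε hε
  obtain ⟨m, hm⟩ := exists_pow_lt_of_lt_one (show 0 < ε / 2 / (4 * C + 1) by positivity)
    (show (1 / 2 : ℝ) < 1 by norm_num)
  obtain ⟨N, hN⟩ := exists_doublingWeight_le hz m
  have hNε : doublingWeight N z * (4 * C) ≤ ε / 2 := by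
    have h := (lt_div_iff₀ (by positivity)).1 (hN.trans_lt hm)
    linarith [doublingWeight_pos N z]
  have hsmall : ∀ᶠ x in 𝓝 z, ∀ n ∈ Finset.range N,
      |circleU n f x - circleU n f z| < ε / 2 := by
    rw [Filter.eventually_all_finset]
    intro n _
    exact Metric.tendsto_nhds.1 (tendsto_circleU hf hnd n) _ (half_pos hε)
  filter_upwards [hsmall, eventually_doublingWeight_eq hnd N] with x hx hwx
  rw [Real.dist_0_eq_abs, abs_of_nonneg (Real.iSup_nonneg fun _ => abs_nonneg _)]
  refine (ciSup_le fun n => ?_).trans_lt (half_lt_self hε)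
  rcases lt_or_ge n N with hn | hn
  · exact (hx n (Finset.mem_range.2 hn)).le
  · have hwz := antitone_doublingWeight z hn
    have hwx' := antitone_doublingWeight x hn
    simp only [hwx] at hwz hwx'
    calc |circleU n f x - circleU n f z|
        ≤ |circleU n f x - f 0| + |circleU n f z - f 0| := by
          rw [abs_sub_comm (circleU n f z)]
          exact abs_sub_le _ _ _
      _ ≤ doublingWeight N z * (2 * C) + doublingWeight N z * (2 * C) := by
          refine add_le_add ((abs_circleU_sub_apply_zero_le hC n x).trans ?_)
            ((abs_circleU_sub_apply_zero_le hC n z).trans ?_) <;> gcongr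
      _ ≤ ε / 2 := by linarith
end
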